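/- For all real α, β > −1, every j ∈ ℕ, every sequence (M_n) of nonnegative reals, and every n ≥ j+1, there exist real numbers b_0(n), b_1(n), …, b_{j+1}(n), not all zero, such that Q_n(x) = Σ_{i=0}^{j+1} b_i(n)·(1−x)^i·P_{n−i}^{(α+2i,β)}(x) as an identity of polynomials. -/

import Mathlib

open Polynomial Filter

/-- The Jacobi polynomial `P_n^{(α,β)}` as a real polynomial. -/
noncomputable def jacobiP (α β : ℝ) (n : ℕ) : Polynomial ℝ :=
  ∑ k ∈ Finset.range (n + 1),
    Polynomial.C (Real.Gamma (n + α + 1) / (Real.Gamma ((n : ℝ) - k + 1) * Real.Gamma (α + k + 1)) *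
        (Real.Gamma (n + β + 1) / (Real.Gamma ((k : ℝ) + 1) * Real.Gamma ((n : ℝ) - k + β + 1)))) *
      (Polynomial.C (2⁻¹ : ℝ) * (Polynomial.X - 1)) ^ k *
      (Polynomial.C (2⁻¹ : ℝ) * (Polynomial.X + 1)) ^ (n - k)

/-- The squared Jacobi norm `‖P_n^{(α,β)}‖²`. -/
noncomputable def jacobiNormSq (α β : ℝ) (n : ℕ) : ℝ :=
  ∫ x in (-1 : ℝ)..1, (jacobiP α β n).eval x ^ 2 * (1 - x) ^ α * (1 + x) ^ β

/-- The kernel `K_n^{(j,k)}(x,y)`. -/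
noncomputable def kernK (α β : ℝ) (j k n : ℕ) (x y : ℝ) : ℝ :=
  ∑ i ∈ Finset.range (n + 1),
    (Polynomial.derivative^[j] (jacobiP α β i)).eval x *
      (Polynomial.derivative^[k] (jacobiP α β i)).eval y / jacobiNormSq α β i

/-- The kernel `K_n^{(j,0)}(1,·)` as a polynomial. -/
noncomputable def kernKPoly (α β : ℝ) (j n : ℕ) : Polynomial ℝ :=
  ∑ i ∈ Finset.range (n + 1),
    Polynomial.C ((Polynomial.derivative^[j] (jacobiP α β i)).eval 1 / jacobiNormSq α β i) *
      jacobiP α β i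

/-- The varying Sobolev inner product `(f,g)_{S,n}` with mass `m`. -/
noncomputable def sobInner (α β : ℝ) (j : ℕ) (m : ℝ) (f g : Polynomial ℝ) : ℝ :=
  (∫ x in (-1 : ℝ)..1, f.eval x * g.eval x * (1 - x) ^ α * (1 + x) ^ β) +
    m * (Polynomial.derivative^[j] f).eval 1 * (Polynomial.derivative^[j] g).eval 1

/-- The Jacobi–Sobolev orthogonal polynomial `Q_n`. -/
noncomputable def sobQ (α β : ℝ) (j : ℕ) (Ms : ℕ → ℝ) (n : ℕ) : Polynomial ℝ :=
  jacobiP α β n -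
    Polynomial.C (Ms n * (Polynomial.derivative^[j] (jacobiP α β n)).eval 1 /
        (1 + Ms n * kernK α β j j (n - 1) 1 1)) *
      kernKPoly α β j (n - 1)

/-!
Since no `P_m^{(α',β)}` vanishes at `1`, dividing by `1 - x` repeatedly writes any polynomial `Q` as
`∑_{i ≤ k} bᵢ (1 - x)ⁱ P_{n-i}^{(α+2i,β)}(x) + (1 - x)^{k+1} T(x)`. Let `k = j + 1`. Both `Q_n` and
every `(1 - x)ⁱ P_{n-i}^{(α+2i,β)}(x)` are orthogonal to `(1 - x)^k p(x)` for `deg p < n - k`: the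
first because the kernel reproduces the functional `p ↦ p⁽ʲ⁾(1)`, which kills multiples of
`(1 - x)^{j+1}`, the second because the weight absorbs the factor `(1 - x)^{2i}`. Pairing with
`p = T` gives `∫ T² (1 - x)^{α+2k+1} (1 + x)^β = 0`, so `T = 0`.

The orthogonality of `P_n` to `(1 + x)^m` for `m < n` comes from Beta integrals: up to a constant,
the pairing is an `n`-th finite difference of a polynomial of degree `m`.
-/

section PolynomialLemmas

lemma degree_C_sub_X_pow_mul_lt_iff {R : Type*} [CommRing R] [IsDomain R] (a : R) (p : R[X])
    (m k : ℕ) : ((C a - X) ^ m * p).degree < ((m + k : ℕ) : WithBot ℕ) ↔ p.degree < k := by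
  have hdeg : (C a - X).degree = 1 := by rw [← neg_sub, degree_neg, degree_X_sub_C]
  rw [degree_mul, degree_pow, hdeg, nsmul_one, Nat.cast_add]
  exact WithBot.add_lt_add_iff_left (WithBot.natCast_ne_bot m)

lemma eval_iterate_derivative_C_sub_X_pow_mul {R : Type*} [CommRing R] (a : R) (p : R[X]) {j m : ℕ}
    (hjm : j < m) : (derivative^[j] ((C a - X) ^ m * p)).eval a = 0 := by
  have hdvd : (C a - X) ^ (m - j) ∣ derivative^[j] ((C a - X) ^ m * p) :=
    pow_sub_dvd_iterate_derivative_of_pow_dvd j (dvd_mul_right _ _)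
  obtain ⟨q, hq⟩ := (dvd_pow_self _ (Nat.sub_ne_zero_of_lt hjm)).trans hdvd
  simp [hq]

lemma exists_eq_sum_C_sub_X_pow_mul_add {K : Type*} [Field K] {a : K} (m : ℕ) {R : ℕ → K[X]}
    (hR : ∀ i, (R i).eval a ≠ 0) (Q : K[X]) :
    ∃ (b : ℕ → K) (T : K[X]),
      Q = ∑ i ∈ Finset.range m, C (b i) * (C a - X) ^ i * R i + (C a - X) ^ m * T := by
  induction m generalizing R Q with
  | zero => exact ⟨0, Q, by simp⟩
  | succ m ih =>
    have hroot : (Q - C (Q.eval a / (R 0).eval a) * R 0).IsRoot a := by simp [hR 0]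
    obtain ⟨S, hS⟩ := dvd_iff_isRoot.2 hroot
    obtain ⟨b, T, hT⟩ := ih (fun i => hR (i + 1)) (-S)
    refine ⟨fun i => i.casesOn (Q.eval a / (R 0).eval a) b, T, ?_⟩
    have hshift : (C a - X) * ∑ i ∈ Finset.range m, C (b i) * (C a - X) ^ i * R (i + 1) =
        ∑ i ∈ Finset.range m, C (b i) * (C a - X) ^ (i + 1) * R (i + 1) := by
      rw [Finset.mul_sum]
      exact Finset.sum_congr rfl fun i _ => by ring
    rw [Finset.sum_range_succ', ← hshift]
    linear_combination hS + (C a - X) * hT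

lemma sum_neg_one_pow_mul_choose_mul_eval_eq_zero {R : Type*} [CommRing R] {P : R[X]} {n : ℕ}
    (hP : P.natDegree < n) (x : R) :
    ∑ k ∈ Finset.range (n + 1), (-1) ^ k * (n.choose k : R) * P.eval (x + (n - k : ℕ)) = 0 := by
  have hdiff := congrFun (fwdDiff_iter_eq_zero_of_degree_lt hP) x
  rw [fwdDiff_iter_eq_sum_shift, ← Finset.sum_flip, Pi.zero_apply] at hdiff
  rw [← hdiff]
  refine Finset.sum_congr rfl fun k hk => ?_
  have hkn : k ≤ n := Finset.mem_range_succ_iff.1 hk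
  simp [Nat.sub_sub_self hkn, Nat.choose_symm hkn]

lemma eqOn_degreeLT_of_eq_on_sequence {K M : Type*} [Field K] [AddCommGroup M] [Module K M]
    (P : Polynomial.Sequence K) {φ ψ : K[X] →ₗ[K] M} {n : ℕ} (h : ∀ i < n, φ (P i) = ψ (P i)) :
    Set.EqOn φ ψ (degreeLT K n) := by
  rw [← P.span_degreeLT fun i _ => (leadingCoeff_ne_zero.2 (P.ne_zero i)).isUnit]
  refine LinearMap.eqOn_span ?_
  rintro _ ⟨i, hi, rfl⟩
  exact h i hi

lemma map_C_mul_eq_mul {K : Type*} [CommSemiring K] (L : K[X] →ₗ[K] K) (c : K) (f : K[X]) :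
    L (C c * f) = c * L f := by
  rw [← smul_eq_C_mul, map_smul, smul_eq_mul]

end PolynomialLemmas

section Integrals

open MeasureTheory Set

lemma Gamma_add_natCast {b : ℝ} (hb : 0 < b) (m : ℕ) :
    Real.Gamma (b + m) = Real.Gamma b * (ascPochhammer ℝ m).eval b := by
  induction m with
  | zero => simp
  | succ m ih =>
    have hbm : b + m ≠ 0 := by positivity
    rw [ascPochhammer_succ_eval, Nat.cast_succ, ← add_assoc, Real.Gamma_add_one hbm, ih]
    ring

lemma integral_rpow_mul_one_sub_rpow {a b : ℝ} (ha : 0 < a) (hb : 0 < b) :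
    ∫ x in (0 : ℝ)..1, x ^ (a - 1) * (1 - x) ^ (b - 1) =
      Real.Gamma a * Real.Gamma b / Real.Gamma (a + b) := by
  have hbeta := ProbabilityTheory.beta_eq_betaIntegralReal a b ha hb
  rw [ProbabilityTheory.beta, Complex.betaIntegral] at hbeta
  rw [hbeta, ← Complex.ofReal_re (∫ x in (0 : ℝ)..1, _), ← intervalIntegral.integral_ofReal]
  congr 1
  refine intervalIntegral.integral_congr fun x hx => ?_
  rw [uIcc_of_le zero_le_one] at hx
  push_cast [Complex.ofReal_cpow hx.1, Complex.ofReal_cpow (sub_nonneg.2 hx.2)]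
  rfl

lemma integral_one_sub_rpow_mul_one_add_rpow {α β : ℝ} (hα : -1 < α) (hβ : -1 < β) :
    ∫ x in (-1 : ℝ)..1, (1 - x) ^ α * (1 + x) ^ β = 2 ^ (α + β + 1) *
      (Real.Gamma (α + 1) * Real.Gamma (β + 1) / Real.Gamma (α + β + 2)) := by
  have hsubst := intervalIntegral.smul_integral_comp_mul_sub
    (fun x : ℝ => (1 - x) ^ α * (1 + x) ^ β) (2 : ℝ) 1 (a := 0) (b := 1)
  norm_num at hsubst
  have hscale : ∀ t ∈ uIcc (0 : ℝ) 1, (1 - (2 * t - 1)) ^ α * (2 * t) ^ β =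
      2 ^ (α + β) * (t ^ (β + 1 - 1) * (1 - t) ^ (α + 1 - 1)) := by
    intro t ht
    rw [uIcc_of_le zero_le_one] at ht
    rw [show 1 - (2 * t - 1) = 2 * (1 - t) by ring, Real.mul_rpow two_pos.le (sub_nonneg.2 ht.2),
      Real.mul_rpow two_pos.le ht.1, Real.rpow_add two_pos, add_sub_cancel_right,
      add_sub_cancel_right]
    ring
  rw [← hsubst, intervalIntegral.integral_congr hscale, intervalIntegral.integral_const_mul,
    integral_rpow_mul_one_sub_rpow (by linarith) (by linarith), Real.rpow_add_one two_ne_zero,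
    show β + 1 + (α + 1) = α + β + 2 by ring]
  ring

lemma intervalIntegrable_one_sub_rpow_mul_one_add_rpow {α β : ℝ} (hα : -1 < α) (hβ : -1 < β) :
    IntervalIntegrable (fun x : ℝ => (1 - x) ^ α * (1 + x) ^ β) volume (-1) 1 := by
  have hleft : IntervalIntegrable (fun x : ℝ => (1 + x) ^ β) volume (-1) 0 := by
    simpa using
      (intervalIntegral.intervalIntegrable_rpow' (a := 0) (b := 1) hβ).comp_add_left 1
  have hright : IntervalIntegrable (fun x : ℝ => (1 - x) ^ α) volume 0 1 := by
    simpa using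
      ((intervalIntegral.intervalIntegrable_rpow' (a := 0) (b := 1) hα).comp_sub_left 1).symm
  refine (hleft.continuousOn_mul fun x hx => ?_).trans (hright.mul_continuousOn fun x hx => ?_)
  all_goals
    rw [uIcc_of_le (by norm_num)] at hx
    refine (ContinuousAt.rpow_const (by fun_prop) (Or.inl ?_)).continuousWithinAt
    linarith [hx.1, hx.2]

end Integrals

section JacobiFunctional

open MeasureTheory Set

variable {α β : ℝ}

lemma intervalIntegrable_eval_mul_jacobiWeight (hα : -1 < α) (hβ : -1 < β) (f : ℝ[X]) :
    IntervalIntegrable (fun x : ℝ => f.eval x * (1 - x) ^ α * (1 + x) ^ β) volume (-1) 1 := by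
  simpa only [mul_assoc] using
    (intervalIntegrable_one_sub_rpow_mul_one_add_rpow hα hβ).continuousOn_mul f.continuousOn

/-- The Jacobi functional `f ↦ ∫_{-1}^1 f(x) (1 - x)^α (1 + x)^β dx`, for which the Jacobi
polynomials are orthogonal. Its linearity needs an integrable weight, so the bounds on `α` and `β`
are arguments. -/
noncomputable def jacobiFunctional (hα : -1 < α) (hβ : -1 < β) : ℝ[X] →ₗ[ℝ] ℝ where
  toFun f := ∫ x in (-1 : ℝ)..1, f.eval x * (1 - x) ^ α * (1 + x) ^ β
  map_add' f g := by
    simp only [eval_add, add_mul]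
    exact intervalIntegral.integral_add (intervalIntegrable_eval_mul_jacobiWeight hα hβ f)
      (intervalIntegrable_eval_mul_jacobiWeight hα hβ g)
  map_smul' c f := by
    simp only [eval_smul, smul_eq_mul, mul_assoc, intervalIntegral.integral_const_mul,
      RingHom.id_apply]

lemma jacobiFunctional_apply (hα : -1 < α) (hβ : -1 < β) (f : ℝ[X]) :
    jacobiFunctional hα hβ f = ∫ x in (-1 : ℝ)..1, f.eval x * (1 - x) ^ α * (1 + x) ^ β :=
  rfl

lemma jacobiFunctional_mul_self_pos (hα : -1 < α) (hβ : -1 < β) {f : ℝ[X]} (hf : f ≠ 0) :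
    0 < jacobiFunctional hα hβ (f * f) := by
  have hnonneg : ∀ x ∈ Ioc (-1 : ℝ) 1, 0 ≤ (f * f).eval x * (1 - x) ^ α * (1 + x) ^ β := by
    intro x hx
    rw [eval_mul]
    exact mul_nonneg (mul_nonneg (mul_self_nonneg _) (Real.rpow_nonneg (by linarith [hx.2]) _))
      (Real.rpow_nonneg (by linarith [hx.1]) _)
  have hsupport : Ioo (-1 : ℝ) 1 \ f.rootSet ℝ ⊆
      Function.support (fun x : ℝ => (f * f).eval x * (1 - x) ^ α * (1 + x) ^ β) ∩ Ioc (-1) 1 := by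
    rintro x ⟨hx, hroot⟩
    have hfx : f.eval x ≠ 0 := fun h => hroot (by simpa [mem_rootSet, hf] using h)
    rw [Function.support, mem_inter_iff, mem_ofPred_eq, eval_mul]
    exact ⟨mul_ne_zero (mul_ne_zero (mul_ne_zero hfx hfx)
      (Real.rpow_pos_of_pos (by linarith [hx.2]) _).ne')
      (Real.rpow_pos_of_pos (by linarith [hx.1]) _).ne', Ioo_subset_Ioc_self hx⟩
  rw [jacobiFunctional_apply, intervalIntegral.integral_pos_iff_support_of_nonneg_ae' ?_
    (intervalIntegrable_eval_mul_jacobiWeight hα hβ _)]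
  · refine ⟨by norm_num, lt_of_lt_of_le ?_ (measure_mono hsupport)⟩
    rw [measure_sdiff_null ((f.rootSet_finite ℝ).measure_zero _)]
    simp
  · rw [uIoc_of_le (by norm_num)]
    exact (ae_restrict_iff' measurableSet_Ioc).2 (.of_forall hnonneg)

lemma jacobiFunctional_pow_mul_pow_mul {α' β' : ℝ} (hα : -1 < α) (hβ : -1 < β) (hα' : -1 < α')
    (hβ' : -1 < β') {p q : ℕ} (hp : α' = α + p) (hq : β' = β + q) (f : ℝ[X]) :
    jacobiFunctional hα hβ ((1 - X) ^ p * (1 + X) ^ q * f) = jacobiFunctional hα' hβ' f := by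
  simp only [jacobiFunctional_apply, hp, hq,
    intervalIntegral.integral_of_le (neg_le_self zero_le_one), integral_Ioc_eq_integral_Ioo]
  refine setIntegral_congr_fun measurableSet_Ioo fun x hx => ?_
  simp only [eval_mul, eval_pow, eval_sub, eval_add, eval_one, eval_X,
    Real.rpow_add (show 0 < 1 - x by linarith [hx.2]),
    Real.rpow_add (show 0 < 1 + x by linarith [hx.1]), Real.rpow_natCast]
  ring

lemma jacobiFunctional_one_sub_X_pow_mul {α' : ℝ} (hα : -1 < α) (hβ : -1 < β) (hα' : -1 < α')
    {p : ℕ} (hp : α' = α + p) (f : ℝ[X]) :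
    jacobiFunctional hα hβ ((1 - X) ^ p * f) = jacobiFunctional hα' hβ f := by
  simpa using jacobiFunctional_pow_mul_pow_mul hα hβ hα' hβ hp (q := 0) (by simp) f

lemma jacobiFunctional_pow_mul_pow (hα : -1 < α) (hβ : -1 < β) (p q : ℕ) :
    jacobiFunctional hα hβ ((1 - X) ^ p * (1 + X) ^ q) = 2 ^ (α + β + (p + q : ℕ) + 1) *
      (Real.Gamma (α + p + 1) * Real.Gamma (β + q + 1) /
        Real.Gamma (α + β + (p + q : ℕ) + 2)) := by
  have hα' : -1 < α + p := by linarith [p.cast_nonneg (α := ℝ)]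
  have hβ' : -1 < β + q := by linarith [q.cast_nonneg (α := ℝ)]
  rw [← mul_one ((1 - X) ^ p * (1 + X) ^ q),
    jacobiFunctional_pow_mul_pow_mul hα hβ hα' hβ' rfl rfl, jacobiFunctional_apply]
  simp only [eval_one, one_mul]
  rw [integral_one_sub_rpow_mul_one_add_rpow hα' hβ', Nat.cast_add, add_add_add_comm]

end JacobiFunctional

section JacobiPolynomials

variable {α β : ℝ}

lemma jacobiP_eq_sum (α β : ℝ) (n : ℕ) :
    jacobiP α β n = C (2⁻¹ ^ n * Real.Gamma (n + α + 1) * Real.Gamma (n + β + 1) / n.factorial) *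
      ∑ k ∈ Finset.range (n + 1),
        C ((-1) ^ k * n.choose k / (Real.Gamma (α + k + 1) * Real.Gamma (β + 1 + (n - k : ℕ)))) *
          ((1 - X) ^ k * (1 + X) ^ (n - k)) := by
  rw [jacobiP, Finset.mul_sum]
  refine Finset.sum_congr rfl fun k hk => ?_
  have hkn : k ≤ n := Finset.mem_range_succ_iff.1 hk
  have hcoeff : Real.Gamma (n + α + 1) / (Real.Gamma (n - k + 1) * Real.Gamma (α + k + 1)) *
        (Real.Gamma (n + β + 1) / (Real.Gamma (k + 1) * Real.Gamma (n - k + β + 1))) *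
        ((-1) ^ k * 2⁻¹ ^ k * 2⁻¹ ^ (n - k)) =
      2⁻¹ ^ n * Real.Gamma (n + α + 1) * Real.Gamma (n + β + 1) / n.factorial *
        ((-1) ^ k * n.choose k / (Real.Gamma (α + k + 1) * Real.Gamma (β + 1 + (n - k : ℕ)))) := by
    have hpow : (2⁻¹ : ℝ) ^ n = 2⁻¹ ^ k * 2⁻¹ ^ (n - k) := by
      rw [← pow_add, Nat.add_sub_cancel' hkn]
    have hfact : (n.factorial : ℝ) ≠ 0 := by positivity
    rw [← Nat.cast_sub hkn, Real.Gamma_nat_eq_factorial, Real.Gamma_nat_eq_factorial,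
      Nat.cast_choose ℝ hkn, show ((n - k : ℕ) : ℝ) + β + 1 = β + 1 + (n - k : ℕ) by ring, hpow]
    field_simp
  have hX : (X - 1 : ℝ[X]) = C (-1) * (1 - X) := by simp
  have hC := congrArg (C : ℝ → ℝ[X]) hcoeff
  rw [hX, add_comm X]
  simp only [mul_pow, C_mul, C_pow] at hC ⊢
  linear_combination ((1 - X) ^ k * (1 + X) ^ (n - k)) * hC

lemma jacobiFunctional_jacobiP_mul_one_add_X_pow (hα : -1 < α) (hβ : -1 < β) {m n : ℕ}
    (hmn : m < n) : jacobiFunctional hα hβ (jacobiP α β n * (1 + X) ^ m) = 0 := by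
  have hterm : ∀ k ∈ Finset.range (n + 1), jacobiFunctional hα hβ
      (C ((-1) ^ k * n.choose k / (Real.Gamma (α + k + 1) * Real.Gamma (β + 1 + (n - k : ℕ)))) *
        ((1 - X) ^ k * (1 + X) ^ (n - k)) * (1 + X) ^ m) =
      2 ^ (α + β + (n + m : ℕ) + 1) / Real.Gamma (α + β + (n + m : ℕ) + 2) *
        ((-1) ^ k * n.choose k * (ascPochhammer ℝ m).eval (β + 1 + (n - k : ℕ))) := by
    intro k hk
    have hkn : k ≤ n := Finset.mem_range_succ_iff.1 hk
    have hβk : 0 < β + 1 + (n - k : ℕ) := by linarith [(n - k).cast_nonneg (α := ℝ)]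
    have hΓα := (Real.Gamma_pos_of_pos (s := α + k + 1) (by linarith [k.cast_nonneg (α := ℝ)])).ne'
    have hΓβ := (Real.Gamma_pos_of_pos hβk).ne'
    rw [mul_assoc, mul_assoc, ← pow_add, map_C_mul_eq_mul, jacobiFunctional_pow_mul_pow,
      ← add_assoc, Nat.add_sub_cancel' hkn,
      show β + ((n - k + m : ℕ) : ℝ) + 1 = β + 1 + (n - k : ℕ) + m by push_cast; ring,
      Gamma_add_natCast hβk]
    field_simp
  rw [jacobiP_eq_sum, mul_assoc, map_C_mul_eq_mul, Finset.sum_mul, map_sum,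
    Finset.sum_congr rfl hterm, ← Finset.mul_sum,
    sum_neg_one_pow_mul_choose_mul_eval_eq_zero (by simpa using hmn), mul_zero, mul_zero]

lemma jacobiFunctional_jacobiP_mul (hα : -1 < α) (hβ : -1 < β) {n : ℕ} {f : ℝ[X]}
    (hf : f.degree < n) : jacobiFunctional hα hβ (jacobiP α β n * f) = 0 := by
  let powers : Polynomial.Sequence ℝ := ⟨fun i => (1 + X) ^ i, fun i => by
    rw [degree_pow, add_comm, ← C_1, degree_X_add_C, nsmul_one]⟩
  refine eqOn_degreeLT_of_eq_on_sequence powers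
    (φ := jacobiFunctional hα hβ ∘ₗ LinearMap.mulLeft ℝ (jacobiP α β n)) (ψ := 0) ?_
    (mem_degreeLT.2 hf)
  exact fun i hi => jacobiFunctional_jacobiP_mul_one_add_X_pow hα hβ hi

lemma jacobiP_eval_one_ne_zero (hα : -1 < α) (hβ : -1 < β) (n : ℕ) :
    (jacobiP α β n).eval 1 ≠ 0 := by
  have heval : (jacobiP α β n).eval 1 =
      Real.Gamma (n + α + 1) / (Real.Gamma (n + 1) * Real.Gamma (α + 1)) *
        (Real.Gamma (n + β + 1) / Real.Gamma (n + β + 1)) := by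
    rw [jacobiP, eval_finsetSum, Finset.sum_eq_single 0 (fun k _ hk => by simp [hk]) (by simp)]
    norm_num
  have hΓ : ∀ s : ℝ, 0 < s → Real.Gamma s ≠ 0 := fun s hs => (Real.Gamma_pos_of_pos hs).ne'
  rw [heval]
  refine mul_ne_zero (div_ne_zero ?_ (mul_ne_zero ?_ ?_)) (div_ne_zero ?_ ?_) <;>
    exact hΓ _ (by linarith [n.cast_nonneg (α := ℝ)])

lemma jacobiP_ne_zero (hα : -1 < α) (hβ : -1 < β) (n : ℕ) : jacobiP α β n ≠ 0 := fun h =>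
  jacobiP_eval_one_ne_zero hα hβ n (by rw [h, eval_zero])

lemma degree_jacobiP_le (α β : ℝ) (n : ℕ) : (jacobiP α β n).degree ≤ n := by
  refine degree_le_of_natDegree_le (natDegree_sum_le_of_forall_le _ _ fun k hk => ?_)
  have hkn : k ≤ n := Finset.mem_range_succ_iff.1 hk
  compute_degree
  omega

lemma degree_jacobiP (hα : -1 < α) (hβ : -1 < β) (n : ℕ) : (jacobiP α β n).degree = n := by
  refine (degree_jacobiP_le α β n).eq_of_not_lt fun hlt => ?_
  exact (jacobiFunctional_mul_self_pos hα hβ (jacobiP_ne_zero hα hβ n)).ne'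
    (jacobiFunctional_jacobiP_mul hα hβ hlt)

lemma jacobiNormSq_eq_jacobiFunctional (hα : -1 < α) (hβ : -1 < β) (n : ℕ) :
    jacobiNormSq α β n = jacobiFunctional hα hβ (jacobiP α β n * jacobiP α β n) := by
  simp only [jacobiNormSq, jacobiFunctional_apply, eval_mul, sq]

lemma jacobiFunctional_jacobiP_mul_jacobiP_of_ne (hα : -1 < α) (hβ : -1 < β) {i k : ℕ}
    (hik : i ≠ k) : jacobiFunctional hα hβ (jacobiP α β i * jacobiP α β k) = 0 := by
  wlog hlt : k < i generalizing i k
  · rw [mul_comm]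
    exact this hik.symm (by omega)
  refine jacobiFunctional_jacobiP_mul hα hβ ((degree_jacobiP_le α β k).trans_lt ?_)
  exact_mod_cast hlt

end JacobiPolynomials

section Kernel

variable {α β : ℝ}

lemma jacobiFunctional_kernKPoly_mul_jacobiP (hα : -1 < α) (hβ : -1 < β) (j : ℕ) {i n : ℕ}
    (hi : i ≤ n) : jacobiFunctional hα hβ (kernKPoly α β j n * jacobiP α β i) =
      (derivative^[j] (jacobiP α β i)).eval 1 := by
  have hnorm := (jacobiFunctional_mul_self_pos hα hβ (jacobiP_ne_zero hα hβ i)).ne'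
  rw [kernKPoly, Finset.sum_mul, map_sum, Finset.sum_eq_single i]
  · rw [mul_assoc, map_C_mul_eq_mul,
      jacobiNormSq_eq_jacobiFunctional hα hβ, div_mul_cancel₀ _ hnorm]
  · intro k _ hki
    rw [mul_assoc, map_C_mul_eq_mul, jacobiFunctional_jacobiP_mul_jacobiP_of_ne hα hβ hki, mul_zero]
  · exact fun hmem => absurd (Finset.mem_range_succ_iff.2 hi) hmem

lemma jacobiFunctional_kernKPoly_mul (hα : -1 < α) (hβ : -1 < β) (j : ℕ) {n : ℕ} {f : ℝ[X]}
    (hf : f.degree < (n + 1 : ℕ)) :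
    jacobiFunctional hα hβ (kernKPoly α β j n * f) = (derivative^[j] f).eval 1 := by
  have heq := eqOn_degreeLT_of_eq_on_sequence ⟨jacobiP α β, degree_jacobiP hα hβ⟩ (n := n + 1)
    (φ := jacobiFunctional hα hβ ∘ₗ LinearMap.mulLeft ℝ (kernKPoly α β j n))
    (ψ := leval 1 ∘ₗ derivative ^ j) fun i hi => ?_
  · simpa [Module.End.pow_apply] using heq (mem_degreeLT.2 hf)
  · simpa [Module.End.pow_apply] using
      jacobiFunctional_kernKPoly_mul_jacobiP hα hβ j (Nat.lt_succ_iff.1 hi)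

lemma degree_kernKPoly_lt (α β : ℝ) (j n : ℕ) : (kernKPoly α β j n).degree < (n + 1 : ℕ) := by
  refine mem_degreeLT.1 (Submodule.sum_mem _ fun i hi => ?_)
  rw [← smul_eq_C_mul]
  refine Submodule.smul_mem _ _ (mem_degreeLT.2 ((degree_jacobiP_le α β i).trans_lt ?_))
  exact_mod_cast Finset.mem_range.1 hi

lemma degree_jacobiP_sub_C_mul_kernKPoly (hα : -1 < α) (hβ : -1 < β) (j : ℕ) (c : ℝ) (n : ℕ) :
    (jacobiP α β (n + 1) - C c * kernKPoly α β j n).degree = (n + 1 : ℕ) := by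
  rw [degree_sub_eq_left_of_degree_lt] <;> rw [degree_jacobiP hα hβ]
  rw [← smul_eq_C_mul]
  exact (degree_smul_le _ _).trans_lt (degree_kernKPoly_lt α β j n)

end Kernel

section Connection

variable {α β : ℝ}

lemma jacobiFunctional_one_sub_X_pow_mul_jacobiP_mul (hα : -1 < α) (hβ : -1 < β) {i k r : ℕ}
    (hik : i ≤ k) {p : ℝ[X]} (hp : p.degree < r) :
    jacobiFunctional hα hβ
      ((1 - X) ^ i * jacobiP (α + 2 * i) β (k + r - i) * ((1 - X) ^ k * p)) = 0 := by
  obtain ⟨l, rfl⟩ := Nat.exists_eq_add_of_le hik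
  have hα' : -1 < α + 2 * i := by linarith [i.cast_nonneg (α := ℝ)]
  have habsorb : (1 - X) ^ i * jacobiP (α + 2 * i) β (i + l + r - i) * ((1 - X) ^ (i + l) * p) =
      (1 - X) ^ (2 * i) * (jacobiP (α + 2 * i) β (l + r) * ((1 - X) ^ l * p)) := by
    rw [show i + l + r - i = l + r by omega]
    ring
  rw [habsorb, jacobiFunctional_one_sub_X_pow_mul hα hβ hα' (by push_cast; rfl)]
  refine jacobiFunctional_jacobiP_mul hα' hβ ?_
  simpa only [C_1] using (degree_C_sub_X_pow_mul_lt_iff 1 p l r).2 hp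

theorem exists_eq_sum_jacobiP_of_orthogonal (hα : -1 < α) (hβ : -1 < β) {k r : ℕ} {Q : ℝ[X]}
    (hQ : Q.degree < (k + r + 1 : ℕ))
    (horth : ∀ p : ℝ[X], p.degree < r → jacobiFunctional hα hβ (Q * ((1 - X) ^ k * p)) = 0) :
    ∃ b : ℕ → ℝ, Q = ∑ i ∈ Finset.range (k + 1),
      C (b i) * (1 - X) ^ i * jacobiP (α + 2 * i) β (k + r - i) := by
  have hshift : ∀ i : ℕ, -1 < α + 2 * i := fun i => by linarith [i.cast_nonneg (α := ℝ)]
  obtain ⟨b, T, hT⟩ := exists_eq_sum_C_sub_X_pow_mul_add (a := 1) (k + 1)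
    (fun i => jacobiP_eval_one_ne_zero (hshift i) hβ (k + r - i)) Q
  rw [C_1] at hT
  refine ⟨b, ?_⟩
  have hTdeg : T.degree < r := by
    rw [← degree_C_sub_X_pow_mul_lt_iff 1 T (k + 1) r, add_right_comm, C_1,
      ← sub_eq_iff_eq_add'.2 hT, ← mem_degreeLT]
    refine Submodule.sub_mem _ (mem_degreeLT.2 hQ) (Submodule.sum_mem _ fun i hi => ?_)
    have hik : i ≤ k := Finset.mem_range_succ_iff.1 hi
    rw [mul_assoc, ← smul_eq_C_mul]
    refine Submodule.smul_mem _ _ (mem_degreeLT.2 ?_)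
    rw [show k + r + 1 = i + (k + r - i + 1) by omega, ← C_1, degree_C_sub_X_pow_mul_lt_iff]
    exact (degree_jacobiP_le _ β (k + r - i)).trans_lt (by exact_mod_cast Nat.lt_succ_self _)
  have hTorth : jacobiFunctional hα hβ ((1 - X) ^ (k + 1) * T * ((1 - X) ^ k * T)) = 0 := by
    rw [← sub_eq_iff_eq_add'.2 hT, sub_mul, map_sub, horth T hTdeg, Finset.sum_mul, map_sum,
      zero_sub, neg_eq_zero]
    refine Finset.sum_eq_zero fun i hi => ?_
    rw [mul_assoc (C _), mul_assoc (C _), map_C_mul_eq_mul,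
      jacobiFunctional_one_sub_X_pow_mul_jacobiP_mul hα hβ (Finset.mem_range_succ_iff.1 hi) hTdeg,
      mul_zero]
  have hT0 : T = 0 := by
    by_contra hne
    have hα' : -1 < α + (2 * k + 1 : ℕ) := by linarith [(2 * k + 1).cast_nonneg (α := ℝ)]
    refine (jacobiFunctional_mul_self_pos hα' hβ hne).ne' ?_
    rw [← jacobiFunctional_one_sub_X_pow_mul hα hβ hα' rfl, ← hTorth]
    congr 1
    ring
  simpa [hT0] using hT

lemma jacobiFunctional_jacobiP_sub_C_mul_kernKPoly_mul (hα : -1 < α) (hβ : -1 < β) {j r : ℕ}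
    (c : ℝ) {p : ℝ[X]} (hp : p.degree < r) :
    jacobiFunctional hα hβ ((jacobiP α β (j + r + 1) - C c * kernKPoly α β j (j + r)) *
      ((1 - X) ^ (j + 1) * p)) = 0 := by
  have hdeg : ((1 - X) ^ (j + 1) * p).degree < ((j + r + 1 : ℕ) : WithBot ℕ) := by
    rwa [add_right_comm, ← C_1, degree_C_sub_X_pow_mul_lt_iff]
  rw [sub_mul, map_sub, jacobiFunctional_jacobiP_mul hα hβ hdeg, mul_assoc, map_C_mul_eq_mul,
    jacobiFunctional_kernKPoly_mul hα hβ j hdeg, ← C_1,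
    eval_iterate_derivative_C_sub_X_pow_mul 1 p j.lt_succ_self, mul_zero, sub_zero]

theorem sobQ_connection_formula_general (α β : ℝ) (hα : -1 < α) (hβ : -1 < β) (j : ℕ) (c : ℝ)
    (n : ℕ) (hn : j + 1 ≤ n) :
    ∃ b : ℕ → ℝ, (∃ i, i ≤ j + 1 ∧ b i ≠ 0) ∧
      jacobiP α β n - C c * kernKPoly α β j (n - 1) =
        ∑ i ∈ Finset.range (j + 2), C (b i) * (1 - X) ^ i * jacobiP (α + 2 * i) β (n - i) := by
  obtain ⟨r, rfl⟩ : ∃ r, n = j + r + 1 := ⟨n - (j + 1), by omega⟩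
  rw [Nat.add_sub_cancel]
  have hdeg := degree_jacobiP_sub_C_mul_kernKPoly hα hβ j c (j + r)
  have hne : jacobiP α β (j + r + 1) - C c * kernKPoly α β j (j + r) ≠ 0 := by
    rw [← degree_ne_bot, hdeg]
    exact WithBot.natCast_ne_bot _
  obtain ⟨b, hb⟩ := exists_eq_sum_jacobiP_of_orthogonal hα hβ (k := j + 1) (r := r)
    (hdeg.trans_lt (by rw [add_right_comm j 1 r]; exact_mod_cast Nat.lt_succ_self _))
    fun p hp => jacobiFunctional_jacobiP_sub_C_mul_kernKPoly_mul hα hβ c hp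
  rw [add_right_comm j 1 r] at hb
  obtain ⟨i, hi, hterm⟩ := Finset.exists_ne_zero_of_sum_ne_zero (hb ▸ hne)
  have hbi : b i ≠ 0 := fun hzero => hterm (by simp [hzero])
  exact ⟨b, ⟨i, Finset.mem_range_succ_iff.1 hi, hbi⟩, hb⟩

end Connection

/-- connection formula
`Q_n(x) = ∑_{i=0}^{j+1} b_i(n) (1-x)^i P_{n-i}^{(α+2i,β)}(x)`. -/
theorem sobQ_connection_formula (α β : ℝ) (hα : -1 < α) (hβ : -1 < β) (j : ℕ)
    (Ms : ℕ → ℝ) (hMs : ∀ n, 0 ≤ Ms n) (n : ℕ) (hn : j + 1 ≤ n) :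
    ∃ b : ℕ → ℝ, (∃ i, i ≤ j + 1 ∧ b i ≠ 0) ∧
      sobQ α β j Ms n =
        ∑ i ∈ Finset.range (j + 2),
          Polynomial.C (b i) * (1 - Polynomial.X) ^ i * jacobiP (α + 2 * i) β (n - i) :=
  sobQ_connection_formula_general α β hα hβ j _ n hn
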